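/- Let s ≥ 1 and k ≥ 1, and let S be a DS(n, s) sequence such that at every position of S at most k symbols are active. Then |S| ≤ ((n + k)/k)·λ_s(3k) + 2n. (This is a precise form of the paper's bound λ_{s,k}(n) = O(n·λ_s(k)/k) on the maximum length of DSA(n, s, k) sequences.) -/

import Mathlib

/-- The alternating list `a, b, a, b, …` of length `m`. -/
def altList {α : Type*} (a b : α) : ℕ → List α
  | 0 => []
  | m + 1 => a :: altList b a m

/-- `S` is a Davenport–Schinzel sequence of order `s` on (at most) `n` symbols:
it uses at most `n` distinct symbols, no two adjacent elements are equal, and it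
contains no alternating subsequence `a, b, a, b, …` of length `s + 2` for distinct
symbols `a, b`. -/
def IsDSSeq {α : Type*} [DecidableEq α] (n s : ℕ) (S : List α) : Prop :=
  S.toFinset.card ≤ n ∧ S.Chain' (· ≠ ·) ∧
    ∀ a b : α, a ≠ b → ¬ (altList a b (s + 2)).Sublist S

/-- `lambdaDS s n` is the maximum length `λ_s(n)` of a `DS(n, s)` sequence. -/
noncomputable def lambdaDS (s n : ℕ) : ℕ :=
  sSup {m | ∃ S : List ℕ, IsDSSeq n s S ∧ S.length = m}

theorem altList_sublist_of_le {α : Type*} (m : ℕ) : ∀ (m' : ℕ) (a b : α), m ≤ m' →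
    (altList a b m).Sublist (altList a b m') := by
  induction m with
  | zero => intro m' a b _; simp [altList]
  | succ m ih =>
    intro m' a b h
    obtain ⟨t, rfl⟩ : ∃ t, m' = t + 1 := ⟨m' - 1, by omega⟩
    exact (ih t b a (by omega)).cons_cons a

theorem map_altList {α β : Type*} (g : α → β) (m : ℕ) : ∀ a b : α,
    (altList a b m).map g = altList (g a) (g b) m := by
  induction m with
  | zero => intro a b; rfl
  | succ m ih => intro a b; simp [altList, ih]

theorem count_zip_aux {α : Type*} [DecidableEq α] {a b : α} (hab : a ≠ b) (S : List α) :
    List.count (a, b) ((b :: S).zip S) = List.count (a, b) (S.zip S.tail) := by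
  cases S with
  | nil => rfl
  | cons z S =>
    have : (b, z) ≠ (a, b) := by
      intro h; exact hab (Prod.ext_iff.1 h).1.symm
    simp [this]

theorem altList_of_count {α : Type*} [DecidableEq α] {a b : α} (hab : a ≠ b) :
    ∀ (N : ℕ) (S : List α), S.length ≤ N →
      (altList a b (2 * List.count (a, b) (S.zip S.tail))).Sublist S := by
  intro N
  induction N with
  | zero => intro S h; have : S = [] := by simpa using h
            subst this; simp [altList]
  | succ N ih =>
    intro S h
    match S, h with
    | [], _ => simp [altList]
    | [x], _ => simp [altList]
    | x :: y :: T, h =>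
      simp only [List.length_cons] at h
      by_cases hxy : (x, y) = (a, b)
      · obtain ⟨rfl, rfl⟩ := Prod.ext_iff.1 hxy
        have e : List.count (x, y) ((x :: y :: T).zip (x :: y :: T).tail)
            = List.count (x, y) (T.zip T.tail) + 1 := by
          rw [← count_zip_aux hab T]
          simp
        dsimp only at hab e ⊢
        rw [e]
        exact ((ih T (by omega)).cons_cons y).cons_cons x
      · have e : List.count (a, b) ((x :: y :: T).zip (x :: y :: T).tail)
            = List.count (a, b) ((y :: T).zip (y :: T).tail) := by
          simp only [List.tail_cons, List.zip_cons_cons]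
          rw [List.count_cons_of_ne hxy]
        rw [e]
        exact (ih (y :: T) (by simp; omega)).cons x

theorem zip_tail_ne {α : Type*} : ∀ (S : List α), S.IsChain (· ≠ ·) →
    ∀ p ∈ S.zip S.tail, p.1 ≠ p.2
  | [], _ => by simp
  | [x], _ => by simp
  | x :: y :: T, h => by
    intro p hp
    rw [List.isChain_cons_cons] at h
    simp only [List.tail_cons, List.zip_cons_cons, List.mem_cons] at hp
    rcases hp with rfl | hp
    · exact h.1
    · exact zip_tail_ne (y :: T) h.2 p hp

theorem ds_bounded {α : Type*} [DecidableEq α] (n s : ℕ) (S : List α) (h : IsDSSeq n s S) :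
    S.length ≤ n * n * (s + 2) + 1 := by
  obtain ⟨h1, h2, h3⟩ := h
  have hl : ∑ p ∈ (S.zip S.tail).toFinset, List.count p (S.zip S.tail)
      = (S.zip S.tail).length := by
    convert List.sum_toFinset_count_eq_length (S.zip S.tail)
  have hb : ∀ p ∈ (S.zip S.tail).toFinset, List.count p (S.zip S.tail) ≤ s + 2 := by
    rintro ⟨a, b⟩ hp
    have hab : a ≠ b := zip_tail_ne S h2 _ (List.mem_toFinset.1 hp)
    by_contra hc
    exact h3 a b hab ((altList_sublist_of_le _ _ a b (by omega)).trans
      (altList_of_count hab _ S le_rfl))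
  have hsub : (S.zip S.tail).toFinset ⊆ S.toFinset ×ˢ S.toFinset := by
    rintro ⟨a, b⟩ hp
    have := List.of_mem_zip (List.mem_toFinset.1 hp)
    simp [this.1, List.mem_of_mem_tail this.2]
  have hc := Finset.card_le_card hsub
  rw [Finset.card_product] at hc
  have hs := Finset.sum_le_card_nsmul _ _ _ hb
  rw [hl] at hs
  simp only [List.length_zip, List.length_tail, smul_eq_mul] at hs
  have : (S.zip S.tail).toFinset.card * (s + 2) ≤ n * n * (s + 2) :=
    Nat.mul_le_mul_right _ (hc.trans (Nat.mul_le_mul h1 h1))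
  omega

theorem ds_le_lambda {α : Type*} [DecidableEq α] (n s : ℕ) (S : List α) (h : IsDSSeq n s S) :
    S.length ≤ lambdaDS s n := by
  rcases S with _ | ⟨d, S'⟩
  · simp
  set S := d :: S' with hSdef
  let f : α → ℕ := fun a => S.idxOf a
  let g : ℕ → α := fun i => S.getD i d
  have hgf : ∀ a ∈ S, g (f a) = a := by
    intro a ha
    have : S.idxOf a < S.length := List.idxOf_lt_length_iff.2 ha
    show S.getD (S.idxOf a) d = a
    rw [List.getD_eq_getElem _ _ this]
    exact List.getElem_idxOf this
  have hmap : (S.map f).map g = S := by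
    rw [List.map_map]
    conv_rhs => rw [← List.map_id S]
    exact List.map_congr_left (fun a ha => hgf a ha)
  apply le_csSup
  · refine ⟨n * n * (s + 2) + 1, ?_⟩
    rintro m ⟨T, hT, rfl⟩
    exact ds_bounded n s T hT
  · obtain ⟨h1, h2, h3⟩ := h
    refine ⟨S.map f, ⟨?_, ?_, ?_⟩, by simp⟩
    · have : (S.map f).toFinset = S.toFinset.image f := by ext; simp
      rw [this]
      exact Finset.card_image_le.trans h1
    · have h2' : ((S.map f).map g).IsChain (· ≠ ·) := by rw [hmap]; exact h2
      rw [List.isChain_map] at h2'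
      exact h2'.imp (fun a b hab e => hab (by rw [e]))
    · intro a b hab hsub
      have ha : a ∈ S.map f := hsub.subset (by simp [altList])
      have hb : b ∈ S.map f := hsub.subset (by simp [altList])
      have hne : g a ≠ g b := by
        obtain ⟨x, hx, rfl⟩ := List.mem_map.1 ha
        obtain ⟨y, hy, rfl⟩ := List.mem_map.1 hb
        rw [hgf x hx, hgf y hy]
        rintro rfl
        exact hab rfl
      have := hsub.map g
      rw [hmap, map_altList] at this
      exact h3 _ _ hne this

theorem exists_prefix_card {α : Type*} [DecidableEq α] (P : List α) (k : ℕ) (T : List α) :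
    P.toFinset.card + k ≤ (P ++ T).toFinset.card →
    ∃ T1 T2, T = T1 ++ T2 ∧ (P ++ T1).toFinset.card = P.toFinset.card + k := by
  induction T using List.reverseRecOn with
  | nil => intro h; exact ⟨[], [], rfl, by simp at h ⊢; omega⟩
  | append_singleton T x ih =>
    intro h
    by_cases hc : P.toFinset.card + k ≤ (P ++ T).toFinset.card
    · obtain ⟨T1, T2, rfl, h2⟩ := ih hc
      exact ⟨T1, T2 ++ [x], by simp, h2⟩
    · refine ⟨T ++ [x], [], by simp, ?_⟩
      have e : (P ++ (T ++ [x])).toFinset = insert x (P ++ T).toFinset := by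
        ext; simp
      have := Finset.card_insert_le x (P ++ T).toFinset
      rw [← e] at this
      omega

theorem block_le {α : Type*} [DecidableEq α] (n s k : ℕ)
    (S : List α) (hS : IsDSSeq n s S)
    (hactive : ∀ i < S.length,
      ((S.take (i + 1)).toFinset ∩ (S.drop (i + 1)).toFinset).card ≤ k)
    (P T R : List α) (hPTR : S = P ++ (T ++ R))
    (hc : (P ++ T).toFinset.card ≤ P.toFinset.card + k) :
    T.length ≤ lambdaDS s (3 * k) := by
  have hinf : T <:+: S := ⟨P, R, by simp [hPTR]⟩
  obtain ⟨_, h2, h3⟩ := hS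
  apply ds_le_lambda
  refine ⟨?_, h2.infix hinf, fun a b hab hsub => h3 a b hab (hsub.trans hinf.sublist)⟩
  have hA : (P.toFinset ∩ (T ++ R).toFinset).card ≤ k := by
    rcases P with _ | ⟨p, P⟩
    · simp
    · have := hactive P.length (by simp [hPTR])
      have e : S = (p :: P) ++ (T ++ R) := hPTR
      rw [e, List.take_left' (by simp), List.drop_left' (by simp)] at this
      exact this
  have hB : ((P ++ T).toFinset \ P.toFinset).card ≤ k := by
    rw [Finset.card_sdiff_of_subset (by intro x; simp; tauto)]
    omega
  have hsub : T.toFinset ⊆ (P.toFinset ∩ (T ++ R).toFinset) ∪ ((P ++ T).toFinset \ P.toFinset) := by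
    intro x; simp; tauto
  have := (Finset.card_le_card hsub).trans (Finset.card_union_le _ _)
  omega

theorem tail_le {α : Type*} [DecidableEq α] (n s k : ℕ)
    (S : List α) (hS : IsDSSeq n s S)
    (hactive : ∀ i < S.length,
      ((S.take (i + 1)).toFinset ∩ (S.drop (i + 1)).toFinset).card ≤ k) (q : ℕ) :
    ∀ P T : List α, S = P ++ T → S.toFinset.card ≤ P.toFinset.card + k * (q + 1) →
      T.length ≤ (q + 1) * lambdaDS s (3 * k) := by
  induction q with
  | zero =>
    intro P T h hc
    have := block_le n s k S hS hactive P T [] (by simpa using h) (by rw [← h]; simpa using hc)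
    simpa using this
  | succ q ih =>
    intro P T h hc
    by_cases hk : P.toFinset.card + k ≤ (P ++ T).toFinset.card
    · obtain ⟨T1, T2, rfl, h2⟩ := exists_prefix_card P k T hk
      have b1 := block_le n s k S hS hactive P T1 T2 h h2.le
      have b2 := ih (P ++ T1) T2 (by simpa using h) (by rw [h2]; linarith)
      rw [List.length_append]
      linarith
    · have := block_le n s k S hS hactive P T [] (by simpa using h) (by omega)
      nlinarith [Nat.zero_le (q * lambdaDS s (3 * k))]

/-- Bound on `DSA(n, s, k)` sequences: if `S` is a `DS(n, s)` sequence such that at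
every position at most `k` symbols are active (a symbol is active at position `i`
if it occurs both at some position `≤ i` and at some position `> i`; equivalently,
it occurs both in `S.take (i+1)` and in `S.drop (i+1)`), then
`|S| ≤ ((n + k)/k) * λ_s(3k) + 2n`. -/
theorem dsa_length_le {α : Type*} [DecidableEq α]
    (n s k : ℕ) (hs : 1 ≤ s) (hk : 1 ≤ k)
    (S : List α) (hS : IsDSSeq n s S)
    (hactive : ∀ i < S.length,
      ((S.take (i + 1)).toFinset ∩ (S.drop (i + 1)).toFinset).card ≤ k) :
    (S.length : ℝ) ≤ ((n + k : ℝ) / k) * lambdaDS s (3 * k) + 2 * n := by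
  have hmain := tail_le n s k S hS hactive (n / k) [] S rfl (by
    have := hS.1
    have h2 := Nat.lt_mul_div_succ n hk
    simp only [List.toFinset_nil, Finset.card_empty]
    omega)
  have hk' : (0 : ℝ) < k := by exact_mod_cast hk
  have h1 : (S.length : ℝ) ≤ ((n / k : ℕ) + 1 : ℝ) * lambdaDS s (3 * k) := by
    exact_mod_cast hmain
  have h2 : ((n / k : ℕ) + 1 : ℝ) ≤ (n + k : ℝ) / k := by
    rw [add_div, div_self hk'.ne']
    have : ((n / k : ℕ) : ℝ) ≤ (n : ℝ) / k := Nat.cast_div_le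
    linarith
  have h3 := mul_le_mul_of_nonneg_right h2 (Nat.cast_nonneg (α := ℝ) (lambdaDS s (3 * k)))
  have h4 : (0 : ℝ) ≤ 2 * n := by positivity
  linarith
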